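/- arXiv:1501.06711 — 2 statements merged into one kernel-verified Lean document; each statement's English description precedes it below -/
import Mathlib

section
/- Let ‖·‖ be a decomposable norm on ℝ^n all of whose unit-ball extreme points have unit ‖·‖_u-norm. For every x ∈ ℝ^n and every y ∈ T_x^⊥, there exists z ∈ T_x^⊥ with ‖z‖* ≤ 1 and ⟨y, z⟩ = ‖y‖. -/
/-!
Write `T = T_x` and call `v` dual feasible if `⟪v, ·⟫ ≤ N`, i.e. if its dual norm is at most one.

Among the vectors of `y + T` choose one, `y + t`, of least norm. By Hahn–Banach it is normed by a
dual feasible `v ⊥ T` (`IsNorm.exists_norming`). It remains to see that `t = 0`, and since `y ⊥ T`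
this follows once `y + t ⊥ T`. Up to scaling, `y + t` lies on the face of the unit ball exposed by
`v`, and by Krein–Milman this face is contained in `T^⊥` as soon as its extreme points are
(`IsNorm.face_subset`).

So let `b` be an extreme point with `⟪v, b⟫ = 1`. As all extreme points are `‖·‖ᵤ`-unit vectors,
Cauchy–Schwarz shows that `b` is dual feasible, hence a subgradient of `N` at `b`, and this forces
`e_b = b` (`DecompStruct.e_eq_self`). Decomposability is now used twice
(`DecompStruct.extPt_mem_perp`). At `x`, the vectors `e_x ± v` are dual feasible, so `e_x + v` and
`v - e_x` are subgradients at `b`; their difference `2 e_x` is therefore orthogonal to `T_b`. At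
`b`, the vectors `b ± e_x` are in turn dual feasible, so `⟪b, x⟫ = 0` and `e_x + b` is a
subgradient at `x`, which means `b ⊥ T`.
-/

open Matrix

namespace PGH

variable {n m : ℕ}

/-- The inner product `⟪x, y⟫ = xᵀ B y` on `ℝⁿ` induced by a matrix `B`. -/
def ip (B : Matrix (Fin n) (Fin n) ℝ) (x y : Fin n → ℝ) : ℝ :=
  dotProduct x (B.mulVec y)

/-- The norm `‖x‖ᵤ = √(xᵀ B x)` induced by the inner product. -/
noncomputable def normu (B : Matrix (Fin n) (Fin n) ℝ) (x : Fin n → ℝ) : ℝ :=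
  Real.sqrt (ip B x x)

/-- `N` is a norm on `ℝⁿ`. -/
structure IsNorm (N : (Fin n → ℝ) → ℝ) : Prop where
  nonneg : ∀ x, 0 ≤ N x
  eq_zero_iff : ∀ x, N x = 0 ↔ x = 0
  triangle : ∀ x y, N (x + y) ≤ N x + N y
  smul_eq : ∀ (c : ℝ) (x), N (c • x) = |c| * N x

/-- The dual norm `‖y‖* = sup {⟪y, x⟫ : N x ≤ 1}`. -/
noncomputable def dualNorm (B : Matrix (Fin n) (Fin n) ℝ) (N : (Fin n → ℝ) → ℝ)
    (y : Fin n → ℝ) : ℝ :=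
  sSup ((fun x => ip B y x) '' {x | N x ≤ 1})

/-- The subdifferential of `N` at `x` with respect to `⟪·,·⟫`. -/
def subdiff (B : Matrix (Fin n) (Fin n) ℝ) (N : (Fin n → ℝ) → ℝ) (x : Fin n → ℝ) :
    Set (Fin n → ℝ) :=
  {z | ∀ y, N x + ip B z (y - x) ≤ N y}

/-- The set `G` of extreme points of the unit ball of `N`. -/
def extPts (N : (Fin n → ℝ) → ℝ) : Set (Fin n → ℝ) :=
  Set.extremePoints ℝ {x | N x ≤ 1}

/-- The orthogonal complement (w.r.t. `⟪·,·⟫`) of a subspace `T`, as a set. -/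
def perp (B : Matrix (Fin n) (Fin n) ℝ) (T : Submodule ℝ (Fin n → ℝ)) :
    Set (Fin n → ℝ) :=
  {v | ∀ u ∈ T, ip B u v = 0}

/-- A decomposability structure for the norm `N`: for every `x` there are a subspace `T x`
and a vector `e x ∈ T x` with `∂N(x) = {e x + v : v ∈ (T x)ᗮ, ‖v‖* ≤ 1}`. -/
structure DecompStruct (B : Matrix (Fin n) (Fin n) ℝ) (N : (Fin n → ℝ) → ℝ) where
  T : (Fin n → ℝ) → Submodule ℝ (Fin n → ℝ)
  e : (Fin n → ℝ) → (Fin n → ℝ)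
  e_mem : ∀ x, e x ∈ T x
  subdiff_eq : ∀ x, subdiff B N x =
    {ξ | ∃ v ∈ perp B (T x), dualNorm B N v ≤ 1 ∧ ξ = e x + v}

/-- `K x = ‖e x‖ᵤ²`. -/
noncomputable def Kfun (B : Matrix (Fin n) (Fin n) ℝ) (N : (Fin n → ℝ) → ℝ)
    (D : DecompStruct B N) (x : Fin n → ℝ) : ℝ :=
  (normu B (D.e x)) ^ 2

/-- Squared Euclidean norm `‖v‖₂²` on `ℝᵐ`. -/
def sq2 (v : Fin m → ℝ) : ℝ := dotProduct v v

/-- The least-squares loss `f(x) = ½ ‖A x - b‖₂²`. -/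
noncomputable def fls (A : Matrix (Fin m) (Fin n) ℝ) (b : Fin m → ℝ) (x : Fin n → ℝ) : ℝ :=
  (1 / 2) * sq2 (A.mulVec x - b)

/-- The adjoint `A* = B⁻¹ Aᵀ` of `A` w.r.t. `⟪·,·⟫`. -/
noncomputable def Astar (B : Matrix (Fin n) (Fin n) ℝ) (A : Matrix (Fin m) (Fin n) ℝ) :
    Matrix (Fin n) (Fin m) ℝ := B⁻¹ * Aᵀ

/-- The gradient `∇f(x) = A*(A x - b)` of the least-squares loss w.r.t. `⟪·,·⟫`. -/
noncomputable def gradf (B : Matrix (Fin n) (Fin n) ℝ) (A : Matrix (Fin m) (Fin n) ℝ)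
    (b : Fin m → ℝ) (x : Fin n → ℝ) : Fin n → ℝ :=
  (Astar B A).mulVec (A.mulVec x - b)

/-- `ρ` is a valid lower restricted isometry constant of `A` at level `k`. -/
def IsLowerRIP (B : Matrix (Fin n) (Fin n) ℝ) (N : (Fin n → ℝ) → ℝ)
    (A : Matrix (Fin m) (Fin n) ℝ) (k ρ : ℝ) : Prop :=
  0 < ρ ∧ ∀ x : Fin n → ℝ, (N x) ^ 2 ≤ k * (normu B x) ^ 2 →
    ρ * (normu B x) ^ 2 ≤ sq2 (A.mulVec x)

/-- `ρ` is a valid upper restricted isometry constant of `A` at level `k`. -/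
def IsUpperRIP (B : Matrix (Fin n) (Fin n) ℝ) (N : (Fin n → ℝ) → ℝ)
    (A : Matrix (Fin m) (Fin n) ℝ) (k ρ : ℝ) : Prop :=
  0 < ρ ∧ ∀ x : Fin n → ℝ, (N x) ^ 2 ≤ k * (normu B x) ^ 2 →
    sq2 (A.mulVec x) ≤ ρ * (normu B x) ^ 2

/-- The regularized objective `φ_λ(x) = f(x) + λ N(x)`. -/
noncomputable def phi (A : Matrix (Fin m) (Fin n) ℝ) (b : Fin m → ℝ)
    (N : (Fin n → ℝ) → ℝ) (lam : ℝ) (x : Fin n → ℝ) : ℝ :=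
  fls A b x + lam * N x

/-- The proximal model `m_{λ,L}(y, x)`. -/
noncomputable def mdl (B : Matrix (Fin n) (Fin n) ℝ) (A : Matrix (Fin m) (Fin n) ℝ)
    (b : Fin m → ℝ) (N : (Fin n → ℝ) → ℝ) (lam L : ℝ) (y x : Fin n → ℝ) : ℝ :=
  fls A b y + ip B (gradf B A b y) (x - y) + (L / 2) * (normu B (x - y)) ^ 2 + lam * N x

/-- `xp = Prox_{λ,L}(y)`, i.e. `xp` minimizes `m_{λ,L}(y, ·)`. -/
def IsProx (B : Matrix (Fin n) (Fin n) ℝ) (A : Matrix (Fin m) (Fin n) ℝ)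
    (b : Fin m → ℝ) (N : (Fin n → ℝ) → ℝ) (lam L : ℝ) (y xp : Fin n → ℝ) : Prop :=
  ∀ u, mdl B A b N lam L y xp ≤ mdl B A b N lam L y u

/-- `ω_λ(x) = min_{ξ ∈ ∂N(x)} ‖λ ξ + ∇f(x)‖*`. -/
noncomputable def omega (B : Matrix (Fin n) (Fin n) ℝ) (A : Matrix (Fin m) (Fin n) ℝ)
    (b : Fin m → ℝ) (N : (Fin n → ℝ) → ℝ) (lam : ℝ) (x : Fin n → ℝ) : ℝ :=
  sInf ((fun ξ => dualNorm B N (lam • ξ + gradf B A b x)) '' subdiff B N x)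

/-- Assumption 1 of the paper, phrased for given valid restricted isometry constants
`ρlow = ρ₋(A, c k₀ (1+γ)²)`, `ρlow2 = ρ₋(A, 72 r c k₀ (1+γ) γinc)` and
`ρup2 = ρ₊(A, 72 r c k₀ (1+γ) γinc)`. -/
def Assumption1 (B : Matrix (Fin n) (Fin n) ℝ) (N : (Fin n → ℝ) → ℝ)
    (A : Matrix (Fin m) (Fin n) ℝ) (z : Fin m → ℝ)
    (c k₀ γinc lamtgt r δ γ ρlow ρlow2 ρup2 : ℝ) : Prop :=
  dualNorm B N ((Astar B A).mulVec z) ≤ lamtgt / 4 ∧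
  1 < r ∧ 0 < δ ∧ δ ≤ 1 / 4 ∧
  γ = (lamtgt * (1 + δ) + dualNorm B N ((Astar B A).mulVec z)) /
      (lamtgt * (1 - δ) - dualNorm B N ((Astar B A).mulVec z)) ∧
  IsLowerRIP B N A (c * k₀ * (1 + γ) ^ 2) ρlow ∧
  IsLowerRIP B N A (72 * r * c * k₀ * (1 + γ) * γinc) ρlow2 ∧
  IsUpperRIP B N A (72 * r * c * k₀ * (1 + γ) * γinc) ρup2 ∧
  ρlow / ρup2 > c / r

/-- One backtracking step: `M` is the smallest element of `{Lt γinc^j : j ≥ 0}`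
for which the proximal point is accepted, and `xt1` is that proximal point. -/
def BacktrackMin (B : Matrix (Fin n) (Fin n) ℝ) (A : Matrix (Fin m) (Fin n) ℝ)
    (b : Fin m → ℝ) (N : (Fin n → ℝ) → ℝ) (lam γinc Lt : ℝ)
    (xt : Fin n → ℝ) (M : ℝ) (xt1 : Fin n → ℝ) : Prop :=
  (∃ j : ℕ, M = Lt * γinc ^ j) ∧
  IsProx B A b N lam M xt xt1 ∧
  phi A b N lam xt1 ≤ mdl B A b N lam M xt xt1 ∧
  ∀ j : ℕ, Lt * γinc ^ j < M →
    ∀ u, IsProx B A b N lam (Lt * γinc ^ j) xt u →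
      ¬ phi A b N lam u ≤ mdl B A b N lam (Lt * γinc ^ j) xt u

/-- The iterates of the proximal-gradient subroutine with backtracking. -/
structure ProxGradSeq (B : Matrix (Fin n) (Fin n) ℝ) (A : Matrix (Fin m) (Fin n) ℝ)
    (b : Fin m → ℝ) (N : (Fin n → ℝ) → ℝ) (lam γinc γdec Lmin : ℝ)
    (x : ℕ → Fin n → ℝ) (L M : ℕ → ℝ) : Prop where
  step : ∀ t, BacktrackMin B A b N lam γinc (L t) (x t) (M (t + 1)) (x (t + 1))
  Lupdate : ∀ t, L (t + 1) = max Lmin (M (t + 1) / γdec)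

/-- The quantity `‖M (x⁻ - x) + ∇f(x) - ∇f(x⁻)‖*` used in the stopping criterion. -/
noncomputable def stopQ (B : Matrix (Fin n) (Fin n) ℝ) (A : Matrix (Fin m) (Fin n) ℝ)
    (b : Fin m → ℝ) (N : (Fin n → ℝ) → ℝ) (Mt : ℝ) (xprev xcur : Fin n → ℝ) : ℝ :=
  dualNorm B N (Mt • (xprev - xcur) + (gradf B A b xcur - gradf B A b xprev))


/-! ### The inner product -/

section InnerProduct

variable (B : Matrix (Fin n) (Fin n) ℝ) (x y z : Fin n → ℝ) (c : ℝ)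

lemma ip_add_left : ip B (x + y) z = ip B x z + ip B y z := by
  simp [ip, add_dotProduct]

lemma ip_add_right : ip B x (y + z) = ip B x y + ip B x z := by
  simp [ip, mulVec_add, dotProduct_add]

lemma ip_smul_left : ip B (c • x) y = c * ip B x y := by
  simp [ip]

lemma ip_smul_right : ip B x (c • y) = c * ip B x y := by
  simp [ip, mulVec_smul]

lemma ip_neg_left : ip B (-x) y = -ip B x y := by
  simp [ip]

lemma ip_neg_right : ip B x (-y) = -ip B x y := by
  simp [ip, mulVec_neg]

lemma ip_sub_left : ip B (x - y) z = ip B x z - ip B y z := by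
  simp [ip, sub_dotProduct]

lemma ip_sub_right : ip B x (y - z) = ip B x y - ip B x z := by
  simp [ip, mulVec_sub, dotProduct_sub]

lemma continuous_ip_right : Continuous (fun y => ip B x y) := by
  unfold ip; fun_prop

end InnerProduct

lemma ip_comm {B : Matrix (Fin n) (Fin n) ℝ} (hB : B.PosDef) (x y : Fin n → ℝ) :
    ip B x y = ip B y x := by
  have h : Bᵀ = B := by simpa using hB.isHermitian.eq
  unfold ip
  rw [dotProduct_comm, dotProduct_mulVec, ← mulVec_transpose, h]

lemma ip_self_nonneg {B : Matrix (Fin n) (Fin n) ℝ} (hB : B.PosDef) (x : Fin n → ℝ) :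
    0 ≤ ip B x x := by
  rcases eq_or_ne x 0 with rfl | hx
  · simp [ip]
  · exact (by simpa [ip] using hB.dotProduct_mulVec_pos hx : 0 < ip B x x).le

lemma eq_zero_of_ip_self {B : Matrix (Fin n) (Fin n) ℝ} (hB : B.PosDef) {x : Fin n → ℝ}
    (h : ip B x x = 0) : x = 0 := by
  by_contra hx
  have : 0 < ip B x x := by simpa [ip] using hB.dotProduct_mulVec_pos hx
  linarith

lemma exists_ip_eq {B : Matrix (Fin n) (Fin n) ℝ} (hB : B.PosDef)
    (g : (Fin n → ℝ) →ₗ[ℝ] ℝ) : ∃ v, ∀ z, ip B v z = g z := by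
  have hu : IsUnit B.det := (isUnit_iff_isUnit_det B).1 hB.isUnit
  refine ⟨B⁻¹ *ᵥ fun i => g (Pi.single i 1), fun z => ?_⟩
  rw [ip_comm hB, ip, mulVec_mulVec, mul_nonsing_inv _ hu, one_mulVec,
    LinearMap.pi_apply_eq_sum_univ g z]
  refine Finset.sum_congr rfl fun i _ => ?_
  refine congrArg (fun w => z i * g w) (funext fun j => ?_)
  simp [Pi.single_apply, eq_comm]

lemma perp_disjoint {B : Matrix (Fin n) (Fin n) ℝ} (hB : B.PosDef)
    {T : Submodule ℝ (Fin n → ℝ)} {t : Fin n → ℝ} (ht : t ∈ T) (ht' : t ∈ perp B T) : t = 0 :=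
  eq_zero_of_ip_self hB (ht' t ht)

lemma convex_perp (B : Matrix (Fin n) (Fin n) ℝ) (T : Submodule ℝ (Fin n → ℝ)) :
    Convex ℝ (perp B T) := by
  intro a ha b hb s t _ _ _ u hu
  rw [ip_add_right, ip_smul_right, ip_smul_right, ha u hu, hb u hu]
  simp

lemma isClosed_perp (B : Matrix (Fin n) (Fin n) ℝ) (T : Submodule ℝ (Fin n → ℝ)) :
    IsClosed (perp B T) := by
  have : perp B T = ⋂ u ∈ T, {v | ip B u v = 0} := by
    ext v; simp [perp]
  rw [this]
  exact isClosed_biInter fun u _ => isClosed_eq (continuous_ip_right B u) continuous_const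

/-! ### The norm and its unit ball -/

namespace IsNorm

variable {N : (Fin n → ℝ) → ℝ}

lemma neg (hN : IsNorm N) (x : Fin n → ℝ) : N (-x) = N x := by
  simpa using hN.smul_eq (-1) x

lemma zero (hN : IsNorm N) : N 0 = 0 := (hN.eq_zero_iff 0).2 rfl

lemma pos (hN : IsNorm N) {x : Fin n → ℝ} (hx : x ≠ 0) : 0 < N x :=
  (hN.nonneg x).lt_of_ne fun h => hx ((hN.eq_zero_iff x).1 h.symm)

lemma convexOn (hN : IsNorm N) : ConvexOn ℝ Set.univ N :=
  ⟨convex_univ, fun x _ y _ a b ha hb _ => by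
    refine (hN.triangle _ _).trans_eq ?_
    rw [hN.smul_eq, hN.smul_eq, abs_of_nonneg ha, abs_of_nonneg hb]; rfl⟩

lemma continuous (hN : IsNorm N) : Continuous N :=
  continuousOn_univ.1 (hN.convexOn.continuousOn isOpen_univ)

/-- Compactness of the sphere: `N` dominates a multiple of the sup norm. -/
lemma exists_norm_le (hN : IsNorm N) : ∃ C : ℝ, 0 ≤ C ∧ ∀ x, ‖x‖ ≤ C * N x := by
  rcases (Metric.sphere (0 : Fin n → ℝ) 1).eq_empty_or_nonempty with h | h
  · refine ⟨0, le_rfl, fun x => ?_⟩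
    by_contra! hx
    have hx : 0 < ‖x‖ := by simpa using hx
    have : ‖x‖⁻¹ • x ∈ Metric.sphere (0 : Fin n → ℝ) 1 := by
      simp [norm_smul, hx.ne']
    simp [h] at this
  · obtain ⟨s, hs, hmin⟩ := (isCompact_sphere (0 : Fin n → ℝ) 1).exists_isMinOn h
      hN.continuous.continuousOn
    have hs0 : s ≠ 0 := by rintro rfl; simp at hs
    have hpos := hN.pos hs0
    refine ⟨(N s)⁻¹, by positivity, fun x => ?_⟩
    rcases eq_or_ne x 0 with rfl | hx
    · simp [hN.zero]
    have hx' : 0 < ‖x‖ := norm_pos_iff.2 hx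
    have h1 : N s ≤ N (‖x‖⁻¹ • x) := hmin (by simp [norm_smul, hx'.ne'])
    rw [hN.smul_eq, abs_of_pos (inv_pos.2 hx'), ← div_eq_inv_mul, le_div_iff₀ hx'] at h1
    rwa [← div_eq_inv_mul, le_div_iff₀' hpos]

lemma isCompact_le (hN : IsNorm N) (r : ℝ) : IsCompact {x | N x ≤ r} := by
  obtain ⟨C, hC, h⟩ := hN.exists_norm_le
  refine (isCompact_closedBall (0 : Fin n → ℝ) (C * r)).of_isClosed_subset
    (isClosed_le hN.continuous continuous_const) fun x hx => ?_
  simpa using (h x).trans (mul_le_mul_of_nonneg_left hx hC)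

lemma convex_le (hN : IsNorm N) (r : ℝ) : Convex ℝ {x | N x ≤ r} := by
  simpa using hN.convexOn.convex_le r

/-- Rescaling shows that membership in the dual unit ball is the pointwise bound
`⟪v, ·⟫ ≤ N`. -/
lemma dualNorm_le_one_iff (hN : IsNorm N) (B : Matrix (Fin n) (Fin n) ℝ) (v : Fin n → ℝ) :
    dualNorm B N v ≤ 1 ↔ ∀ z, ip B v z ≤ N z := by
  constructor
  · intro h z
    rcases eq_or_ne z 0 with rfl | hz
    · simp [ip, hN.zero]
    have hp := hN.pos hz
    have hb : BddAbove ((fun x => ip B v x) '' {x | N x ≤ 1}) :=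
      ((hN.isCompact_le 1).image (continuous_ip_right B v)).bddAbove
    have h1 : ip B v ((N z)⁻¹ • z) ≤ 1 := by
      refine (le_csSup hb ⟨_, ?_, rfl⟩).trans h
      simp [hN.smul_eq, abs_of_pos hp, hp.ne']
    rw [ip_smul_right, ← div_eq_inv_mul, div_le_one hp] at h1
    exact h1
  · intro h
    refine csSup_le ⟨_, 0, by simp [hN.zero], rfl⟩ ?_
    rintro _ ⟨z, hz, rfl⟩
    exact (h z).trans hz

lemma mem_subdiff_iff (hN : IsNorm N) (B : Matrix (Fin n) (Fin n) ℝ) (v x : Fin n → ℝ) :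
    v ∈ subdiff B N x ↔ ip B v x = N x ∧ ∀ z, ip B v z ≤ N z := by
  constructor
  · intro h
    have h0 : N x + ip B v (0 - x) ≤ N 0 := h 0
    have h2 : N x + ip B v ((2 : ℝ) • x - x) ≤ N ((2 : ℝ) • x) := h _
    rw [hN.zero, zero_sub, ip_neg_right] at h0
    rw [hN.smul_eq, ip_sub_right, ip_smul_right, abs_two] at h2
    have hx : ip B v x = N x := by linarith
    refine ⟨hx, fun z => ?_⟩
    have hz : N x + ip B v (z - x) ≤ N z := h z
    rw [ip_sub_right] at hz
    linarith
  · rintro ⟨h1, h2⟩ z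
    rw [ip_sub_right]
    linarith [h2 z]

/-- If `u` has least norm in its coset `u + T`, then some functional vanishing on `T` and bounded
by `N` norms `u`: extend `t + c • u ↦ c * N u` by Hahn–Banach. -/
lemma exists_norming (hN : IsNorm N) {B : Matrix (Fin n) (Fin n) ℝ} (hB : B.PosDef)
    {T : Submodule ℝ (Fin n → ℝ)} {u : Fin n → ℝ} (hu : u ∉ T)
    (hmin : ∀ t ∈ T, N u ≤ N (u + t)) :
    ∃ v ∈ perp B T, (∀ z, ip B v z ≤ N z) ∧ ip B v u = N u := by
  let f0 : (Fin n → ℝ) →ₗ.[ℝ] ℝ := ⟨T, 0⟩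
  let f := f0.supSpanSingleton u (N u) hu
  have hf : ∀ t (ht : t ∈ T) (c : ℝ) h, f ⟨t + c • u, h⟩ = c * N u := fun t ht c h => by
    refine (f0.supSpanSingleton_apply_mk u (N u) hu t ht c).trans ?_
    simp [f0]
  obtain ⟨g, hgf, hgN⟩ := exists_extension_of_le_sublinear f N
    (fun c hc x => by rw [hN.smul_eq, abs_of_pos hc]) hN.triangle (by
      rintro ⟨w, hw⟩
      obtain ⟨t, ht, _, hs, rfl⟩ := Submodule.mem_sup.1 hw
      obtain ⟨c, rfl⟩ := Submodule.mem_span_singleton.1 hs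
      rw [hf t ht]
      rcases le_or_gt c 0 with hc | hc
      · exact (mul_nonpos_of_nonpos_of_nonneg hc (hN.nonneg u)).trans (hN.nonneg _)
      · have h1 := hmin _ (T.smul_mem c⁻¹ ht)
        have h2 : t + c • u = c • (u + c⁻¹ • t) := by
          rw [smul_add, smul_smul, mul_inv_cancel₀ hc.ne', one_smul, add_comm]
        change c * N u ≤ N (t + c • u)
        rw [h2, hN.smul_eq, abs_of_pos hc]
        exact mul_le_mul_of_nonneg_left h1 hc.le)
  have hg : ∀ t ∈ T, ∀ c : ℝ, g (t + c • u) = c * N u := fun t ht c => by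
    rw [← hf t ht c (Submodule.mem_sup.2
      ⟨t, ht, _, Submodule.mem_span_singleton.2 ⟨c, rfl⟩, rfl⟩)]
    exact hgf ⟨t + c • u, _⟩
  obtain ⟨v, hv⟩ := exists_ip_eq hB g
  refine ⟨v, fun t ht => ?_, fun z => (hv z).trans_le (hgN z), ?_⟩
  · rw [ip_comm hB, hv]
    simpa using hg t ht 0
  · rw [hv]
    simpa using hg 0 T.zero_mem 1

/-- A coset of a subspace contains a point of least norm. -/
lemma exists_min_add (hN : IsNorm N) (T : Submodule ℝ (Fin n → ℝ)) (y : Fin n → ℝ) :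
    ∃ t ∈ T, ∀ s ∈ T, N (y + t) ≤ N (y + s) := by
  have hcont : Continuous fun t => N (y + t) := hN.continuous.comp (by fun_prop)
  have hK : IsCompact ((T : Set (Fin n → ℝ)) ∩ {t | N (y + t) ≤ N y}) := by
    refine (hN.isCompact_le (N y + N y)).of_isClosed_subset
      (T.closed_of_finiteDimensional.inter (isClosed_le hcont continuous_const)) ?_
    rintro t ⟨-, ht⟩
    have h1 := hN.triangle (y + t) (-y)
    rw [hN.neg, add_neg_cancel_comm] at h1
    exact h1.trans (by gcongr; exact ht)
  obtain ⟨t, ht, hmin⟩ := hK.exists_isMinOn ⟨0, T.zero_mem, by simp⟩ hcont.continuousOn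
  refine ⟨t, ht.1, fun s hs => ?_⟩
  rcases le_total (N (y + s)) (N y) with h | h
  · exact hmin ⟨hs, h⟩
  · exact le_trans ht.2 h

/-- The face of the unit ball exposed by `v` lies in any closed convex set that contains the
extreme points of the ball on that face. -/
lemma face_subset (hN : IsNorm N) {B : Matrix (Fin n) (Fin n) ℝ} {v : Fin n → ℝ}
    (hv : ∀ z, ip B v z ≤ N z)
    {S : Set (Fin n → ℝ)} (hS : Convex ℝ S) (hS' : IsClosed S)
    (h : ∀ b ∈ extPts N, ip B v b = 1 → b ∈ S) {z : Fin n → ℝ} (hz : N z ≤ 1)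
    (hvz : ip B v z = 1) : z ∈ S := by
  set F : Set (Fin n → ℝ) := {z | N z ≤ 1} ∩ {z | ip B v z = 1} with hF
  have hFc : IsCompact F := (hN.isCompact_le 1).inter_right
    (isClosed_eq (continuous_ip_right B v) continuous_const)
  have hFconv : Convex ℝ F := (hN.convex_le 1).inter fun a ha b hb s t _ _ hst => by
    simp only [Set.mem_ofPred_eq] at ha hb ⊢
    rw [ip_add_right, ip_smul_right, ip_smul_right, ha, hb]
    linarith
  have hext : IsExtreme ℝ {z | N z ≤ 1} F := by
    refine ⟨Set.inter_subset_left, ?_⟩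
    rintro a ha b hb w ⟨-, hw⟩ ⟨s, t, hs, ht, hst, rfl⟩
    refine ⟨ha, ?_⟩
    simp only [Set.mem_ofPred_eq] at ha hb hw ⊢
    rw [ip_add_right, ip_smul_right, ip_smul_right] at hw
    have h1 := (hv a).trans ha
    have h2 := (hv b).trans hb
    nlinarith
  have hzF : z ∈ closure (convexHull ℝ (F.extremePoints ℝ)) := by
    rw [closure_convexHull_extremePoints hFc hFconv]; exact ⟨hz, hvz⟩
  refine closure_minimal (convexHull_min (fun b hb => ?_) hS) hS' hzF
  exact h b (hext.extremePoints_subset_extremePoints hb) hb.1.2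

/-- If all extreme points of the unit ball are `‖·‖ᵤ`-unit vectors, each of them is a functional
of dual norm at most one. By Krein–Milman it suffices to bound `⟪a, b⟫` for extreme `b`. -/
lemma ip_extPt_le (hN : IsNorm N) {B : Matrix (Fin n) (Fin n) ℝ} (hB : B.PosDef)
    (hExt : ∀ a ∈ extPts N, ip B a a = 1) {a : Fin n → ℝ} (ha : a ∈ extPts N) :
    ∀ z, ip B a z ≤ N z := by
  rw [← hN.dualNorm_le_one_iff]
  refine csSup_le ⟨_, 0, by simp [hN.zero], rfl⟩ ?_
  rintro _ ⟨z, hz, rfl⟩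
  rw [← closure_convexHull_extremePoints (hN.isCompact_le 1) (hN.convex_le 1)] at hz
  refine closure_minimal (t := {z | ip B a z ≤ 1}) (convexHull_min (fun b hb => ?_) ?_)
    (isClosed_le (continuous_ip_right B a) continuous_const) hz
  · have h := ip_self_nonneg hB (a - b)
    rw [ip_sub_left, ip_sub_right, ip_sub_right, ip_comm hB b a, hExt a ha, hExt b hb] at h
    simp only [Set.mem_ofPred_eq]
    linarith
  · intro x hx y hy s t hs ht hst
    simp only [Set.mem_ofPred_eq] at hx hy ⊢
    rw [ip_add_right, ip_smul_right, ip_smul_right]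
    nlinarith

end IsNorm

/-! ### Extreme points and decomposability -/

section Decomposable

variable {B : Matrix (Fin n) (Fin n) ℝ} {N : (Fin n → ℝ) → ℝ}

lemma DecompStruct.e_add_mem (D : DecompStruct B N) {x v : Fin n → ℝ}
    (hN : IsNorm N) (hv : v ∈ perp B (D.T x)) (hv' : ∀ z, ip B v z ≤ N z) :
    D.e x + v ∈ subdiff B N x := by
  rw [D.subdiff_eq]
  exact ⟨v, hv, (hN.dualNorm_le_one_iff B v).2 hv', rfl⟩

lemma DecompStruct.sub_e_mem (D : DecompStruct B N) {x ξ : Fin n → ℝ}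
    (h : ξ ∈ subdiff B N x) : ξ - D.e x ∈ perp B (D.T x) := by
  rw [D.subdiff_eq] at h
  obtain ⟨v, hv, -, rfl⟩ := h
  simpa using hv

/-- At a vector `b` that is a subgradient of `N` at itself, the vector `e b` equals `b`: writing
`b = e b + w` with `w ⊥ T b`, both `⟪b, b⟫` and `⟪e b, b⟫` equal `N b`, so `⟪w, w⟫ = 0`. -/
lemma DecompStruct.e_eq_self (D : DecompStruct B N) (hB : B.PosDef) (hN : IsNorm N)
    {b : Fin n → ℝ} (hb : b ∈ subdiff B N b) : D.e b = b := by
  have hw := D.sub_e_mem hb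
  have he : D.e b ∈ subdiff B N b := by
    simpa using D.e_add_mem (v := 0) hN (fun u _ => by simp [ip])
      (fun z => by simpa [ip] using hN.nonneg z)
  have h1 := ((hN.mem_subdiff_iff B _ _).1 he).1
  have h2 := ((hN.mem_subdiff_iff B _ _).1 hb).1
  have h3 := hw _ (D.e_mem b)
  have h4 : b - D.e b = 0 := eq_zero_of_ip_self hB (by
    rw [ip_sub_left, h3, ip_sub_right, h2, ip_comm hB, h1]; ring)
  exact (sub_eq_zero.1 h4).symm

/-- The heart of the argument. Let `v ⊥ T x` lie in the dual unit ball and be a subgradient at an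
extreme point `b`. Both `e x + v` and `v - e x` are subgradients at `b`, so `e x ⊥ T b`; since
`e b = b`, the vectors `e x ± b` then lie in the dual unit ball, which forces `⟪b, x⟫ = 0` and
makes `e x + b` a subgradient at `x`. -/
lemma DecompStruct.extPt_mem_perp (D : DecompStruct B N) (hB : B.PosDef) (hN : IsNorm N)
    (hExt : ∀ a ∈ extPts N, ip B a a = 1) {x v b : Fin n → ℝ} (hv : v ∈ perp B (D.T x))
    (hv' : ∀ z, ip B v z ≤ N z) (hb : b ∈ extPts N) (hvb : ip B v b = 1) :
    b ∈ perp B (D.T x) := by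
  have hNb : N b = 1 := le_antisymm hb.1 (hvb ▸ hv' b)
  have hbb : b ∈ subdiff B N b :=
    (hN.mem_subdiff_iff B _ _).2 ⟨by rw [hExt b hb, hNb], hN.ip_extPt_le hB hExt hb⟩
  have heb := D.e_eq_self hB hN hbb
  have dual_neg : ∀ {w : Fin n → ℝ}, (∀ z, ip B w z ≤ N z) → ∀ z, ip B (-w) z ≤ N z :=
    fun {w} h z => by
      rw [ip_neg_left, ← ip_neg_right, ← hN.neg]; exact h _
  have perp_neg : ∀ {T : Submodule ℝ (Fin n → ℝ)} {w : Fin n → ℝ}, w ∈ perp B T →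
      -w ∈ perp B T := fun h u hu => by rw [ip_neg_right, h u hu, neg_zero]
  obtain ⟨-, hplus⟩ := (hN.mem_subdiff_iff B _ _).1 (D.e_add_mem hN hv hv')
  obtain ⟨-, hminus⟩ := (hN.mem_subdiff_iff B _ _).1
    (D.e_add_mem hN (perp_neg hv) (dual_neg hv'))
  obtain ⟨hex, he⟩ := (hN.mem_subdiff_iff B (D.e x) x).1 (by
    simpa using D.e_add_mem (x := x) (v := 0) hN (fun u _ => by simp [ip])
      (fun z => by simpa [ip] using hN.nonneg z))
  -- As `⟪v, b⟫ = N b = 1`, evaluating the dual feasible `e x + v` and `v - e x` at `b` bounds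
  -- `⟪e x, b⟫` by zero from both sides.
  have hminus := dual_neg hminus
  have heb0 : ip B (D.e x) b = 0 := by
    have h1 := hplus b
    have h2 := hminus b
    rw [ip_add_left] at h1
    rw [ip_neg_left, ip_add_left, ip_neg_left] at h2
    linarith
  have hs1 : D.e x + v ∈ subdiff B N b := (hN.mem_subdiff_iff B _ _).2
    ⟨by rw [ip_add_left]; linarith, hplus⟩
  have hs2 : -(D.e x + -v) ∈ subdiff B N b := (hN.mem_subdiff_iff B _ _).2
    ⟨by rw [ip_neg_left, ip_add_left, ip_neg_left]; linarith, hminus⟩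
  have hexT : D.e x ∈ perp B (D.T b) := fun u hu => by
    have h1 := D.sub_e_mem hs1 u hu
    have h2 := D.sub_e_mem hs2 u hu
    simp only [ip_sub_right, ip_add_right, ip_neg_right] at h1 h2
    linarith
  obtain ⟨-, hp⟩ := (hN.mem_subdiff_iff B _ _).1 (D.e_add_mem hN hexT he)
  obtain ⟨-, hm⟩ := (hN.mem_subdiff_iff B _ _).1
    (D.e_add_mem hN (perp_neg hexT) (dual_neg he))
  rw [heb] at hp hm
  have hbx : ip B b x = 0 := by
    have h1 := hp x
    have h2 := dual_neg hm x
    rw [ip_add_left] at h1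
    rw [ip_neg_left, ip_add_left, ip_neg_left] at h2
    linarith
  have hfin : b + D.e x ∈ subdiff B N x := (hN.mem_subdiff_iff B _ _).2
    ⟨by rw [ip_add_left]; linarith, hp⟩
  simpa using D.sub_e_mem hfin

end Decomposable

/-- **Lemma 7 / dual version.** For every `x` and every `y ∈ T_x^⊥` there
exists `z ∈ T_x^⊥` with `‖z‖* ≤ 1` and `⟪y, z⟫ = ‖y‖`. -/
theorem dual_attainment_on_perp {n : ℕ}
    (B : Matrix (Fin n) (Fin n) ℝ) (hB : B.PosDef)
    (N : (Fin n → ℝ) → ℝ) (hN : IsNorm N)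
    (hExt : ∀ a ∈ extPts N, normu B a = 1)
    (D : DecompStruct B N) :
    ∀ x : Fin n → ℝ, ∀ y ∈ perp B (D.T x),
      ∃ zz ∈ perp B (D.T x), dualNorm B N zz ≤ 1 ∧ ip B y zz = N y := by
  intro x y hy
  have hExt' : ∀ a ∈ extPts N, ip B a a = 1 := fun a ha => by
    rw [← Real.sqrt_eq_one]; exact hExt a ha
  rcases eq_or_ne y 0 with rfl | hy0
  · refine ⟨0, hy, (hN.dualNorm_le_one_iff B 0).2 fun z => ?_, ?_⟩
    · simpa [ip] using hN.nonneg z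
    · simp [ip, hN.zero]
  obtain ⟨t, ht, hmin⟩ := hN.exists_min_add (D.T x) y
  have hu : y + t ∉ D.T x := fun h =>
    hy0 (perp_disjoint hB ((Submodule.add_mem_iff_left _ ht).1 h) hy)
  obtain ⟨v, hv, hvN, hvu⟩ := hN.exists_norming hB hu fun s hs => by
    rw [add_assoc]; exact hmin _ (add_mem ht hs)
  have hpos : 0 < N (y + t) := hN.pos fun h => hu (h ▸ zero_mem _)
  have hface : (N (y + t))⁻¹ • (y + t) ∈ perp B (D.T x) :=
    hN.face_subset hvN (convex_perp B _) (isClosed_perp B _)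
      (fun b hb hvb => D.extPt_mem_perp hB hN hExt' hv hvN hb hvb)
      (by rw [hN.smul_eq, abs_of_pos (inv_pos.2 hpos), inv_mul_cancel₀ hpos.ne'])
      (by rw [ip_smul_right, hvu, inv_mul_cancel₀ hpos.ne'])
  -- Both `y` and `y + t` are orthogonal to `T x`, hence so is `t ∈ T x`.
  have ht0 : t = 0 := perp_disjoint hB ht fun u hu => by
    have h := hface u hu
    rw [ip_smul_right, ip_add_right, hy u hu, zero_add] at h
    exact (mul_eq_zero.1 h).resolve_left (inv_ne_zero hpos.ne')
  rw [ht0, add_zero] at hvu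
  exact ⟨v, hv, (hN.dualNorm_le_one_iff B v).2 hvN, by rw [ip_comm hB, hvu]⟩

end PGH
end

section
/- Let ‖·‖ be a decomposable norm on ℝ^n all of whose unit-ball extreme points have unit ‖·‖_u-norm, and let {a₁, …, a_k} be an orthogonal subset of the extreme-point set G such that for every choice of scalars η₁, …, η_k with |ηᵢ| ≤ 1 one has ‖Σ_{i=1}^k ηᵢ aᵢ‖* ≤ 1. If y = Σ_{i=1}^k βᵢ aᵢ with βᵢ ∈ ℝ, then K(y) = #{i : βᵢ ≠ 0}. -/
/-!
Write `s i = sign (β i)` and `z = ∑ i, s i • a i`. By hypothesis `‖z‖* ≤ 1`, and orthonormality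
of the `a i` gives `⟪z, y⟫ = ∑ i, |β i| ≥ N y`, so `z` is a subgradient of `N` at `y` and
`N y = ∑ i, |β i|`. Conversely, any subgradient `ξ` at `y` satisfies `⟪ξ, y⟫ = N y` and
`⟪ξ, a i⟫ ≤ 1` in absolute value, which forces `⟪ξ, a i⟫ = s i` whenever `β i ≠ 0`; hence
`⟪ξ, z⟫` is the number of nonzero `β i`. Apply this to `ξ = e y`, which is a subgradient.
Decomposability writes `z = e y + v` with `v` orthogonal to `e y`, so
`K y = ⟪e y, e y⟫ = ⟪e y, z⟫`.

The dual norm is a real supremum, so the inequality `⟪z, x⟫ ≤ ‖z‖* N x` rests on boundedness of the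
unit ball, that is, on continuity of linear functionals in finite dimension
(`exists_bound_of_finiteDimensional`).
-/

open Matrix

namespace PGH

variable {n m : ℕ}

/-- A linear functional on a finite-dimensional space is bounded with respect to any norm `N`.
Stated for a space without topology, so that `N` can be installed as its norm. -/
theorem exists_bound_of_finiteDimensional {E : Type*} [AddCommGroup E] [Module ℝ E]
    [FiniteDimensional ℝ E] (N : E → ℝ) (h0 : ∀ x, N x = 0 ↔ x = 0)
    (htri : ∀ x y, N (x + y) ≤ N x + N y) (hsmul : ∀ (c : ℝ) (x), N (c • x) = |c| * N x)
    (f : E →ₗ[ℝ] ℝ) : ∃ C : ℝ, ∀ x, f x ≤ C * N x := by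
  let _ : NormedAddCommGroup E := AddGroupNorm.toNormedAddCommGroup
    { toFun := N
      map_zero' := (h0 0).2 rfl
      add_le' := htri
      neg' := fun x => by simpa using hsmul (-1) x
      eq_zero_of_map_eq_zero' := fun x hx => (h0 x).1 hx }
  let _ : NormedSpace ℝ E := ⟨fun c x => (hsmul c x).le⟩
  exact ⟨‖LinearMap.toContinuousLinearMap f‖, fun x =>
    (le_abs_self _).trans ((LinearMap.toContinuousLinearMap f).le_opNorm x)⟩

theorem ip_add_left_s15 (B : Matrix (Fin n) (Fin n) ℝ) (u v w : Fin n → ℝ) :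
    ip B (u + v) w = ip B u w + ip B v w := add_dotProduct _ _ _

theorem ip_smul_left_s15 (B : Matrix (Fin n) (Fin n) ℝ) (c : ℝ) (u w : Fin n → ℝ) :
    ip B (c • u) w = c * ip B u w := smul_dotProduct _ _ _

theorem ip_add_right_s15 (B : Matrix (Fin n) (Fin n) ℝ) (u v w : Fin n → ℝ) :
    ip B u (v + w) = ip B u v + ip B u w := by
  simp [ip, mulVec_add]

theorem ip_smul_right_s15 (B : Matrix (Fin n) (Fin n) ℝ) (c : ℝ) (u w : Fin n → ℝ) :
    ip B u (c • w) = c * ip B u w := by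
  simp [ip, mulVec_smul]

theorem ip_sub_right_s15 (B : Matrix (Fin n) (Fin n) ℝ) (u v w : Fin n → ℝ) :
    ip B u (v - w) = ip B u v - ip B u w := by
  simp [ip, mulVec_sub]

/-- The functional `⟪u, ·⟫`. -/
def ipRight (B : Matrix (Fin n) (Fin n) ℝ) (u : Fin n → ℝ) : (Fin n → ℝ) →ₗ[ℝ] ℝ where
  toFun := ip B u
  map_add' := ip_add_right_s15 B u
  map_smul' c w := ip_smul_right_s15 B c u w

theorem ip_sum_left (B : Matrix (Fin n) (Fin n) ℝ) {k : ℕ} (c : Fin k → ℝ)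
    (a : Fin k → Fin n → ℝ) (w : Fin n → ℝ) :
    ip B (∑ i, c i • a i) w = ∑ i, c i * ip B (a i) w := by
  simp [ip, sum_dotProduct]

theorem ip_sum_right (B : Matrix (Fin n) (Fin n) ℝ) {k : ℕ} (c : Fin k → ℝ)
    (a : Fin k → Fin n → ℝ) (u : Fin n → ℝ) :
    ip B u (∑ i, c i • a i) = ∑ i, c i * ip B u (a i) := by
  have h := map_sum (ipRight B u) (fun i => c i • a i) Finset.univ
  simp only [map_smul, smul_eq_mul] at h
  exact h

theorem ip_le_of_dualNorm_le_one (B : Matrix (Fin n) (Fin n) ℝ) {N : (Fin n → ℝ) → ℝ}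
    (hN : IsNorm N) {z : Fin n → ℝ} (hz : dualNorm B N z ≤ 1) (x : Fin n → ℝ) :
    ip B z x ≤ N x := by
  rcases (hN.nonneg x).eq_or_lt with h | h
  · obtain rfl := (hN.eq_zero_iff x).1 h.symm
    simp [ip, ← h]
  obtain ⟨C, hC⟩ := exists_bound_of_finiteDimensional N hN.eq_zero_iff hN.triangle hN.smul_eq
    (ipRight B z)
  have hbdd : BddAbove ((fun x => ip B z x) '' {x | N x ≤ 1}) := by
    refine ⟨|C|, ?_⟩
    rintro _ ⟨w, hw, rfl⟩
    calc ip B z w ≤ C * N w := hC w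
      _ ≤ |C| * N w := mul_le_mul_of_nonneg_right (le_abs_self C) (hN.nonneg w)
      _ ≤ |C| := mul_le_of_le_one_right (abs_nonneg C) hw
  have hmem : N ((N x)⁻¹ • x) ≤ 1 := by
    rw [hN.smul_eq, abs_of_pos (inv_pos.2 h), inv_mul_cancel₀ h.ne']
  have h1 : ip B z ((N x)⁻¹ • x) ≤ 1 :=
    (le_csSup hbdd (Set.mem_image_of_mem (fun x => ip B z x) hmem)).trans hz
  rw [ip_smul_right_s15, inv_mul_le_iff₀ h, mul_one] at h1
  exact h1

theorem dualNorm_zero_le_one (B : Matrix (Fin n) (Fin n) ℝ) (N : (Fin n → ℝ) → ℝ) :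
    dualNorm B N 0 ≤ 1 := by
  refine Real.sSup_le ?_ zero_le_one
  rintro _ ⟨w, -, rfl⟩
  simp [ip]

theorem DecompStruct.e_mem_subdiff {B : Matrix (Fin n) (Fin n) ℝ} {N : (Fin n → ℝ) → ℝ}
    (D : DecompStruct B N) (x : Fin n → ℝ) : D.e x ∈ subdiff B N x := by
  rw [D.subdiff_eq]
  exact ⟨0, fun u _ => by simp [ip], dualNorm_zero_le_one B N, by simp⟩

/-- A subgradient of a norm at `y` attains `N y` at `y` and is dominated by `N` everywhere. -/
theorem ip_of_mem_subdiff {B : Matrix (Fin n) (Fin n) ℝ} {N : (Fin n → ℝ) → ℝ}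
    (hN : IsNorm N) {y ξ : Fin n → ℝ} (hξ : ξ ∈ subdiff B N y) :
    ip B ξ y = N y ∧ ∀ w, ip B ξ w ≤ N w := by
  have h0 := hξ ((0 : ℝ) • y)
  have h2 := hξ ((2 : ℝ) • y)
  rw [ip_sub_right_s15, ip_smul_right_s15, hN.smul_eq] at h0 h2
  norm_num at h0 h2
  have he : ip B ξ y = N y := by linarith
  refine ⟨he, fun w => ?_⟩
  have := hξ w
  rw [ip_sub_right_s15] at this
  linarith

theorem IsNorm.sum_smul_le {N : (Fin n → ℝ) → ℝ} (hN : IsNorm N) {k : ℕ}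
    {a : Fin k → Fin n → ℝ} (ha : ∀ i, N (a i) ≤ 1) (β : Fin k → ℝ) :
    N (∑ i, β i • a i) ≤ ∑ i, |β i| := by
  refine (Finset.le_sum_of_subadditive N ((hN.eq_zero_iff 0).2 rfl).le hN.triangle _ _).trans ?_
  refine Finset.sum_le_sum fun i _ => ?_
  rw [hN.smul_eq]
  exact mul_le_of_le_one_right (abs_nonneg _) (ha i)

/-- **Lemma 8 / `arbit-sum-primal`.** Let `{a i}` be an orthogonal subset of
the extreme points satisfying condition (II). If `y = ∑ i, β i • a i`, then `K(y)` equals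
the number of nonzero coefficients `β i`. -/
theorem Kfun_of_orthogonal_combination {n : ℕ}
    (B : Matrix (Fin n) (Fin n) ℝ) (hB : B.PosDef)
    (N : (Fin n → ℝ) → ℝ) (hN : IsNorm N)
    (hExt : ∀ a ∈ extPts N, normu B a = 1)
    (D : DecompStruct B N)
    (k : ℕ) (a : Fin k → Fin n → ℝ)
    (ha : ∀ i, a i ∈ extPts N)
    (horth : ∀ i j, i ≠ j → ip B (a i) (a j) = 0)
    (hII : ∀ η : Fin k → ℝ, (∀ i, |η i| ≤ 1) → dualNorm B N (∑ i, η i • a i) ≤ 1)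
    (β : Fin k → ℝ) (y : Fin n → ℝ) (hy : y = ∑ i, β i • a i) :
    Kfun B N D y = (Nat.card {i : Fin k // β i ≠ 0} : ℝ) := by
  have hNa : ∀ i, N (a i) ≤ 1 := fun i => (ha i).1
  have haa : ∀ i, ip B (a i) (a i) = 1 := fun i => Real.sqrt_eq_one.1 (hExt _ (ha i))
  set s : Fin k → ℝ := fun i => (SignType.sign (β i) : ℝ) with hs
  set z : Fin n → ℝ := ∑ i, s i • a i with hz
  have hzdual : dualNorm B N z ≤ 1 := by
    refine hII s fun i => ?_
    rcases lt_trichotomy (β i) 0 with h | h | h <;> simp [hs, h]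
  have hzN := ip_le_of_dualNorm_le_one B hN hzdual
  have hzy : ip B z y = ∑ i, |β i| := by
    rw [hz, ip_sum_left]
    refine Finset.sum_congr rfl fun i _ => ?_
    rw [hy, ip_sum_right, Finset.sum_eq_single i
      (fun j _ hj => by rw [horth i j hj.symm, mul_zero]) (by simp), haa, mul_one]
    exact sign_mul_self (β i)
  have hNy : N y = ∑ i, |β i| :=
    le_antisymm (hy ▸ hN.sum_smul_le hNa β) (hzy ▸ hzN y)
  have hzmem : z ∈ subdiff B N y := fun w => by
    rw [ip_sub_right_s15, hzy, hNy]
    linarith [hzN w]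
  obtain ⟨hey, heN⟩ := ip_of_mem_subdiff hN (D.e_mem_subdiff y)
  have hle : ∀ i, β i * ip B (D.e y) (a i) ≤ |β i| := fun i => by
    rw [← ip_smul_right_s15]
    refine (heN _).trans ?_
    rw [hN.smul_eq]
    exact mul_le_of_le_one_right (abs_nonneg _) (hNa i)
  -- The termwise inequalities `hle` sum to an equality, so each of them is an equality.
  have heq : ∀ i, β i * ip B (D.e y) (a i) = |β i| := by
    have hsum : ∑ i, β i * ip B (D.e y) (a i) = ∑ i, |β i| := by
      rw [← ip_sum_right, ← hy, hey, hNy]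
    intro i
    exact (Finset.sum_eq_sum_iff_of_le fun i _ => hle i).1 hsum i (Finset.mem_univ i)
  have hez : ip B (D.e y) z = (Nat.card {i : Fin k // β i ≠ 0} : ℝ) := by
    have hterm : ∀ i, s i * ip B (D.e y) (a i) = if β i ≠ 0 then 1 else 0 := by
      intro i
      by_cases h : β i = 0
      · simp [hs, h]
      · rw [if_pos h]
        apply mul_left_cancel₀ (abs_ne_zero.2 h)
        rw [← mul_assoc, mul_one, mul_comm |β i|, hs]
        simp only [sign_mul_abs]
        exact heq i
    rw [hz, ip_sum_right, Finset.sum_congr rfl fun i _ => hterm i, Finset.sum_boole,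
      Nat.card_eq_fintype_card, Fintype.card_subtype]
  rw [D.subdiff_eq] at hzmem
  obtain ⟨v, hv, -, hzv⟩ := hzmem
  have hee : ip B (D.e y) (D.e y) = (Nat.card {i : Fin k // β i ≠ 0} : ℝ) := by
    rw [← hez, hzv, ip_add_right_s15, hv _ (D.e_mem y), add_zero]
  rw [Kfun, normu, Real.sq_sqrt (hee ▸ Nat.cast_nonneg _), hee]

end PGH
end
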